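/- arXiv:2202.01551 — 2 statements merged into one kernel-verified Lean document; each statement's English description precedes it below -/
import Mathlib

section
/- Assume that either H_i ≠ {0} for all i ∈ Ω or P is hierarchical, and fix ω : Ω → ℝ^{>0}. Define Q = {μ ∈ Aut(P) : μ is the identity on Ω − K, and ω(i) = ω(μ(i)) and H_i ≅ H_{μ(i)} for all i ∈ Ω}. Then: (i) for every φ ∈ GL_{(P,ω)}(H) there exists a unique λ ∈ Aut(P) with λ the identity on Ω − K and ⟨supp(φ(α))⟩_P = λ[⟨supp(α)⟩_P] for all α ∈ H, and such λ lies in Q; (ii) conversely, any ψ ∈ Aut_S(H) for which there exists μ ∈ Q with ⟨supp(ψ(α))⟩_P = μ[⟨supp(α)⟩_P] for all α ∈ H belongs to GL_{(P,ω)}(H); (iii) the resulting map ζ : GL_{(P,ω)}(H) → Q sending φ to its λ is a surjective group homomorphism with kernel GL_P(H). -/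
def idl {Ω : Type*} [PartialOrder Ω] (B : Set Ω) : Set Ω := {a | ∃ b ∈ B, a ≤ b}

noncomputable def lenP {Ω : Type*} [PartialOrder Ω] (y : Ω) : ℕ :=
  sSup {n : ℕ | ∃ c : Finset Ω, IsChain (· ≤ ·) (c : Set Ω) ∧ y ∈ c ∧ (∀ x ∈ c, x ≤ y) ∧ c.card = n}

def Hierarchical (Ω : Type*) [PartialOrder Ω] : Prop :=
  ∀ u v : Ω, lenP u + 1 ≤ lenP v → u ≤ v

def hsupp {Ω : Type*} {H : Ω → Type*} [∀ i, Zero (H i)] (β : ∀ i, H i) : Set Ω :=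
  {i | β i ≠ 0}

def Kset {Ω : Type*} (H : Ω → Type*) [∀ i, Zero (H i)] : Set Ω := {i | ∃ x : H i, x ≠ 0}

/-- The `(P,ω)`-weight of `β`. -/
noncomputable def wtw {Ω : Type*} [PartialOrder Ω] {H : Ω → Type*} [∀ i, Zero (H i)]
    (ω : Ω → ℝ) (β : ∀ i, H i) : ℝ :=
  ∑ᶠ i ∈ idl (hsupp β), ω i

/-- Membership in the group `Q` of order automorphisms of the poset. -/
def Qpred (S : Type*) [Ring S] {Ω : Type*} [PartialOrder Ω] (H : Ω → Type*)
    [∀ i, AddCommGroup (H i)] [∀ i, Module S (H i)] (ω : Ω → ℝ) (μ : Ω ≃o Ω) : Prop :=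
  (∀ i ∉ Kset H, μ i = i) ∧
    ∀ i : Ω, ω i = ω (μ i) ∧ Nonempty (H i ≃ₗ[S] H (μ i))

/-- Membership in `GL_{(P,ω)}(H)`, i.e. being a `(P,ω)`-weight isometry. -/
def GLw (S : Type*) [Ring S] {Ω : Type*} [PartialOrder Ω] (H : Ω → Type*)
    [∀ i, AddCommGroup (H i)] [∀ i, Module S (H i)] (ω : Ω → ℝ)
    (φ : (∀ i, H i) ≃ₗ[S] (∀ i, H i)) : Prop :=
  ∀ α : ∀ i, H i, wtw ω (φ α) = wtw ω α

/-- Membership in `GL_P(H)`, i.e. preserving `P`-support. -/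
def GLPsupp (S : Type*) [Ring S] {Ω : Type*} [PartialOrder Ω] (H : Ω → Type*)
    [∀ i, AddCommGroup (H i)] [∀ i, Module S (H i)]
    (φ : (∀ i, H i) ≃ₗ[S] (∀ i, H i)) : Prop :=
  ∀ α : ∀ i, H i, idl (hsupp (φ α)) = idl (hsupp α)

section helpers

set_option linter.unusedSectionVars false

variable {Ω : Type*} [Fintype Ω] [PartialOrder Ω]
  {S : Type*} [Ring S] {H : Ω → Type*} [∀ i, AddCommGroup (H i)] [∀ i, Module S (H i)]

noncomputable def WW (ω : Ω → ℝ) (s : Set Ω) : ℝ := ∑ᶠ i ∈ s, ω i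

noncomputable def pp (ω : Ω → ℝ) (i : Ω) : ℝ := WW ω (Set.Iic i)

theorem WW_le {ω : Ω → ℝ} (hω : ∀ i, 0 < ω i) {s t : Set Ω} (h : s ⊆ t) : WW ω s ≤ WW ω t := by
  classical
  unfold WW
  rw [finsum_mem_eq_finite_toFinset_sum _ (Set.toFinite s),
    finsum_mem_eq_finite_toFinset_sum _ (Set.toFinite t)]
  apply Finset.sum_le_sum_of_subset_of_nonneg
  · simpa using h
  · intro i _ _; exact (hω i).le

theorem WW_lt {ω : Ω → ℝ} (hω : ∀ i, 0 < ω i) {s t : Set Ω} (h : s ⊆ t) {j : Ω} (hj : j ∈ t)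
    (hj' : j ∉ s) : WW ω s < WW ω t := by
  classical
  unfold WW
  rw [finsum_mem_eq_finite_toFinset_sum _ (Set.toFinite s),
    finsum_mem_eq_finite_toFinset_sum _ (Set.toFinite t)]
  apply Finset.sum_lt_sum_of_subset (i := j)
  · simpa using h
  · simpa using hj
  · simpa using hj'
  · exact hω j
  · intro i _ _; exact (hω i).le

theorem pp_lt {ω : Ω → ℝ} (hω : ∀ i, 0 < ω i) {i j : Ω} (h : i < j) : pp ω i < pp ω j :=
  WW_lt hω (Set.Iic_subset_Iic.2 h.le) (j := j) (by simp) (by simpa using h.not_ge)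

theorem pp_eq (ω : Ω → ℝ) (i : Ω) : pp ω i = ω i + WW ω (Set.Iio i) := by
  unfold pp WW
  rw [← finsum_mem_insert _ (by simp) (Set.toFinite _)]
  have : Set.Iic i = insert i (Set.Iio i) := by
    ext; simp [le_iff_eq_or_lt]
  rw [this]

theorem eq_of_le_pp {ω : Ω → ℝ} (hω : ∀ i, 0 < ω i) {i j : Ω} (h : i ≤ j)
    (hp : pp ω i = pp ω j) : i = j := by
  rcases h.eq_or_lt with h | h
  · exact h
  · exact absurd hp (pp_lt hω h).ne

theorem subset_idl' (B : Set Ω) : B ⊆ idl B := fun b hb => ⟨b, hb, le_rfl⟩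

theorem Iic_sub {α : ∀ i, H i} {j : Ω} (h : α j ≠ 0) : Set.Iic j ⊆ idl (hsupp α) :=
  fun k hk => ⟨j, h, hk⟩

theorem pp_le_wt {ω : Ω → ℝ} (hω : ∀ i, 0 < ω i) {α : ∀ i, H i} {j : Ω} (h : α j ≠ 0) :
    pp ω j ≤ wtw ω α := WW_le hω (Iic_sub h)

theorem idl_eq {ω : Ω → ℝ} (hω : ∀ i, 0 < ω i) {α : ∀ i, H i} {j : Ω} (h : α j ≠ 0)
    (hw : wtw ω α ≤ pp ω j) : idl (hsupp α) = Set.Iic j := by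
  refine Set.Subset.antisymm ?_ (Iic_sub h)
  intro k hk
  by_contra hn
  exact absurd hw (WW_lt hω (Iic_sub h) hk hn).not_ge

open Classical in
theorem idl_single {i : Ω} {x : H i} (hx : x ≠ 0) :
    idl (hsupp (Pi.single i x : ∀ i, H i)) = Set.Iic i := by
  refine Set.Subset.antisymm ?_ (Iic_sub (by simpa using hx))
  rintro k ⟨b, hb, hk⟩
  by_cases h : b = i
  · subst h; exact hk
  · exact absurd (Pi.single_eq_of_ne h x) hb

open Classical in
theorem wt_single (ω : Ω → ℝ) {i : Ω} {x : H i} (hx : x ≠ 0) :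
    wtw ω (Pi.single i x : ∀ i, H i) = pp ω i := by
  unfold wtw pp WW
  rw [idl_single hx]

theorem GLw_symm {ω : Ω → ℝ} {φ : (∀ i, H i) ≃ₗ[S] (∀ i, H i)} (h : GLw S H ω φ) :
    GLw S H ω φ.symm := by
  intro α
  have := h (φ.symm α)
  simpa using this.symm

open Classical in
theorem exists_single (φ : (∀ i, H i) ≃ₗ[S] (∀ i, H i)) (α : ∀ i, H i) {j : Ω}
    (h : φ α j ≠ 0) : ∃ i, α i ≠ 0 ∧ φ (Pi.single i (α i)) j ≠ 0 := by
  have h1 : φ α = ∑ i, φ (Pi.single i (α i)) := by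
    rw [← map_sum, Finset.univ_sum_single]
  rw [h1, Finset.sum_apply] at h
  obtain ⟨i, _, hi⟩ := Finset.exists_ne_zero_of_sum_ne_zero h
  refine ⟨i, ?_, hi⟩
  intro h0
  apply hi
  simp [h0]

theorem low {ω : Ω → ℝ} (hω : ∀ i, 0 < ω i) {φ : (∀ i, H i) ≃ₗ[S] (∀ i, H i)}
    (hφ : GLw S H ω φ) {t : ℝ} {α : ∀ i, H i} (h : ∀ j, α j ≠ 0 → pp ω j < t) :
    ∀ j, φ α j ≠ 0 → pp ω j < t := by
  classical
  intro j hj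
  obtain ⟨i, hi, hij⟩ := exists_single φ α hj
  have := pp_le_wt hω hij
  rw [hφ, wt_single ω hi] at this
  exact this.trans_lt (h i hi)

open Classical in
def RR (ω : Ω → ℝ) (φ : (∀ i, H i) ≃ₗ[S] (∀ i, H i)) (i j : Ω) : Prop :=
  pp ω j = pp ω i ∧ ∀ x : H i, x ≠ 0 → φ (Pi.single i x) j ≠ 0

open Classical in
theorem RR_idl {ω : Ω → ℝ} (hω : ∀ i, 0 < ω i) {φ : (∀ i, H i) ≃ₗ[S] (∀ i, H i)}
    (hφ : GLw S H ω φ) {i j : Ω} (h : RR ω φ i j) {x : H i} (hx : x ≠ 0) :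
    idl (hsupp (φ (Pi.single i x))) = Set.Iic j := by
  apply idl_eq hω (h.2 x hx)
  rw [hφ, wt_single ω hx, h.1]

open Classical in
theorem exists_top {ω : Ω → ℝ} (hω : ∀ i, 0 < ω i) {φ : (∀ i, H i) ≃ₗ[S] (∀ i, H i)}
    (hφ : GLw S H ω φ) {i : Ω} {x : H i} (hx : x ≠ 0) :
    ∃ j, pp ω j = pp ω i ∧ φ (Pi.single i x) j ≠ 0 := by
  by_contra! hc
  have h1 : ∀ j, φ (Pi.single i x) j ≠ 0 → pp ω j < pp ω i := by
    intro j hj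
    have := pp_le_wt hω hj
    rw [hφ, wt_single ω hx] at this
    exact lt_of_le_of_ne this fun h => hj (hc j h)
  have h2 := low hω (GLw_symm hφ) h1 i (by simpa using hx)
  exact lt_irrefl _ h2

theorem exists_RR {ω : Ω → ℝ} (hω : ∀ i, 0 < ω i) {φ : (∀ i, H i) ≃ₗ[S] (∀ i, H i)}
    (hφ : GLw S H ω φ) {i : Ω} (hi : i ∈ Kset H) : ∃ j, j ∈ Kset H ∧ RR ω φ i j := by
  classical
  obtain ⟨x, hx⟩ := hi
  obtain ⟨j, hj, hxj⟩ := exists_top hω hφ hx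
  refine ⟨j, ⟨_, hxj⟩, hj, ?_⟩
  intro y hy hyj
  obtain ⟨k, hk, hyk⟩ := exists_top hω hφ hy
  have hjk : j ≠ k := by rintro rfl; exact hyk hyj
  have ix : idl (hsupp (φ (Pi.single i x))) = Set.Iic j := by
    apply idl_eq hω hxj; rw [hφ, wt_single ω hx, hj]
  have hxk : φ (Pi.single i x) k = 0 := by
    by_contra hne
    have : k ∈ Set.Iic j := ix ▸ subset_idl' _ hne
    exact hjk (eq_of_le_pp hω this (hk.trans hj.symm)).symm
  have e : φ (Pi.single i (x + y)) = φ (Pi.single i x) + φ (Pi.single i y) := by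
    rw [Pi.single_add, map_add]
  have sj : φ (Pi.single i (x + y)) j ≠ 0 := by
    rw [e, Pi.add_apply, hyj, add_zero]; exact hxj
  have sk : φ (Pi.single i (x + y)) k ≠ 0 := by
    rw [e, Pi.add_apply, hxk, zero_add]; exact hyk
  have hxy : x + y ≠ 0 := by
    intro h0; rw [h0] at sj; simp at sj
  have ixy : idl (hsupp (φ (Pi.single i (x + y)))) = Set.Iic j := by
    apply idl_eq hω sj; rw [hφ, wt_single ω hxy, hj]
  have : k ∈ Set.Iic j := ixy ▸ subset_idl' _ sk
  exact hjk (eq_of_le_pp hω this (hk.trans hj.symm)).symm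

open Classical in
theorem RR_back {ω : Ω → ℝ} (hω : ∀ i, 0 < ω i) {φ : (∀ i, H i) ≃ₗ[S] (∀ i, H i)}
    (hφ : GLw S H ω φ) {i j : Ω} (h : RR ω φ i j) (x : H i) :
    φ.symm (Pi.single j (φ (Pi.single i x) j)) i = x := by
  by_cases hx : x = 0
  · subst hx; simp
  have h1 : ∀ k, (φ (Pi.single i x) - Pi.single j (φ (Pi.single i x) j)) k ≠ 0 →
      pp ω k < pp ω i := by
    intro k hk
    have hkj : k ≠ j := by rintro rfl; simp at hk
    rw [Pi.sub_apply, Pi.single_eq_of_ne hkj, sub_zero] at hk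
    have : k ∈ Set.Iic j := RR_idl hω hφ h hx ▸ subset_idl' _ hk
    rw [← h.1]
    exact pp_lt hω (lt_of_le_of_ne this hkj)
  have h2 : φ.symm (φ (Pi.single i x) - Pi.single j (φ (Pi.single i x) j)) i = 0 := by
    by_contra hne
    exact lt_irrefl _ (low hω (GLw_symm hφ) h1 i hne)
  rw [map_sub, Pi.sub_apply, LinearEquiv.symm_apply_apply, Pi.single_eq_same, sub_eq_zero] at h2
  exact h2.symm

theorem RR_inv {ω : Ω → ℝ} (hω : ∀ i, 0 < ω i) {φ : (∀ i, H i) ≃ₗ[S] (∀ i, H i)}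
    (hφ : GLw S H ω φ) {i j k : Ω} (hi : i ∈ Kset H) (h : RR ω φ i j)
    (h' : RR ω φ.symm j k) : k = i := by
  classical
  obtain ⟨x, hx⟩ := hi
  have h1 := RR_back hω hφ h x
  have h2 := RR_idl hω (GLw_symm hφ) h' (h.2 x hx)
  have : i ∈ Set.Iic k := h2 ▸ subset_idl' _ (show _ ≠ _ by rw [h1]; exact hx)
  exact (eq_of_le_pp hω this (h.1.symm.trans h'.1.symm)).symm

def FF (ω : Ω → ℝ) (φ : (∀ i, H i) ≃ₗ[S] (∀ i, H i)) (f : Ω → Ω) : Prop :=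
  (∀ i ∉ Kset H, f i = i) ∧ ∀ i ∈ Kset H, f i ∈ Kset H ∧ RR ω φ i (f i)

theorem exists_FF {ω : Ω → ℝ} (hω : ∀ i, 0 < ω i) {φ : (∀ i, H i) ≃ₗ[S] (∀ i, H i)}
    (hφ : GLw S H ω φ) : ∃ f, FF ω φ f := by
  classical
  have : ∀ i, ∃ j, (i ∉ Kset H → j = i) ∧ (i ∈ Kset H → j ∈ Kset H ∧ RR ω φ i j) := by
    intro i
    by_cases hi : i ∈ Kset H
    · obtain ⟨j, hj⟩ := exists_RR hω hφ hi
      exact ⟨j, fun h => absurd hi h, fun _ => hj⟩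
    · exact ⟨i, fun _ => rfl, fun h => absurd h hi⟩
  choose f hf using this
  exact ⟨f, fun i => (hf i).1, fun i => (hf i).2⟩

theorem FF_inv {ω : Ω → ℝ} (hω : ∀ i, 0 < ω i) {φ : (∀ i, H i) ≃ₗ[S] (∀ i, H i)}
    (hφ : GLw S H ω φ) {f g : Ω → Ω} (hf : FF ω φ f) (hg : FF ω φ.symm g) (i : Ω) :
    g (f i) = i := by
  by_cases hi : i ∈ Kset H
  · exact RR_inv hω hφ hi (hf.2 i hi).2 (hg.2 _ (hf.2 i hi).1).2
  · rw [hf.1 i hi, hg.1 i hi]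

theorem FF_pp {ω : Ω → ℝ} {φ : (∀ i, H i) ≃ₗ[S] (∀ i, H i)}
    {f : Ω → Ω} (hf : FF ω φ f) (i : Ω) : pp ω (f i) = pp ω i := by
  by_cases hi : i ∈ Kset H
  · exact (hf.2 i hi).2.1
  · rw [hf.1 i hi]

theorem len_lt {i j : Ω} (h : i < j) : lenP i < lenP j := by
  classical
  have bdd : ∀ y : Ω, BddAbove {n : ℕ | ∃ c : Finset Ω, IsChain (· ≤ ·) (c : Set Ω) ∧ y ∈ c ∧
      (∀ x ∈ c, x ≤ y) ∧ c.card = n} := by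
    intro y
    refine ⟨Fintype.card Ω, ?_⟩
    rintro n ⟨c, _, _, _, rfl⟩
    exact Finset.card_le_univ c
  have ne : {n : ℕ | ∃ c : Finset Ω, IsChain (· ≤ ·) (c : Set Ω) ∧ i ∈ c ∧
      (∀ x ∈ c, x ≤ i) ∧ c.card = n}.Nonempty :=
    ⟨1, {i}, by simp, by simp, by simp, by simp⟩
  obtain ⟨c, hc, hi, hle, hcard⟩ := Nat.sSup_mem ne (bdd i)
  have hj : j ∉ c := fun hj => absurd (hle j hj) h.not_ge
  have : c.card + 1 ≤ lenP j := by
    apply le_csSup (bdd j)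
    refine ⟨insert j c, ?_, by simp, ?_, by simp [hj]⟩
    · rw [Finset.coe_insert]
      apply hc.insert
      intro b hb _
      exact Or.inr ((hle b hb).trans h.le)
    · intro x hx
      rcases Finset.mem_insert.1 hx with rfl | hx
      · exact le_rfl
      · exact (hle x hx).trans h.le
  have e : c.card = lenP i := hcard
  omega

theorem hier_lt (hh : Hierarchical Ω) {i j : Ω} : i < j ↔ lenP i < lenP j := by
  refine ⟨len_lt, fun h => lt_of_le_of_ne (hh i j h) ?_⟩
  rintro rfl; exact lt_irrefl _ h

theorem hier_len (hh : Hierarchical Ω) {ω : Ω → ℝ} (hω : ∀ i, 0 < ω i) {i j : Ω}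
    (h : pp ω i = pp ω j) : lenP i = lenP j := by
  rcases lt_trichotomy (lenP i) (lenP j) with h1 | h1 | h1
  · exact absurd h (pp_lt hω ((hier_lt hh).2 h1)).ne
  · exact h1
  · exact absurd h (pp_lt hω ((hier_lt hh).2 h1)).ne'

theorem FF_mono (hassum : (∀ i : Ω, ∃ x : H i, x ≠ 0) ∨ Hierarchical Ω)
    {ω : Ω → ℝ} (hω : ∀ i, 0 < ω i) {φ : (∀ i, H i) ≃ₗ[S] (∀ i, H i)}
    (hφ : GLw S H ω φ) {f : Ω → Ω} (hf : FF ω φ f) : Monotone f := by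
  classical
  intro k i hki
  rcases hki.eq_or_lt with rfl | hlt
  · exact le_rfl
  rcases hassum with hK | hh
  · obtain ⟨x, hx⟩ := hK i
    obtain ⟨y, hy⟩ := hK k
    have hi := (hf.2 i (hK i)).2
    have hk := (hf.2 k (hK k)).2
    by_contra hn
    have plt := pp_lt hω hlt
    have ix := RR_idl hω hφ hi hx
    have iy := RR_idl hω hφ hk hy
    have s1 : φ (Pi.single i x) (f k) = 0 := by
      by_contra hne
      exact hn (show f k ∈ Set.Iic (f i) from ix ▸ subset_idl' _ hne)
    have s2 : φ (Pi.single k y) (f i) = 0 := by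
      by_contra hne
      have : f i ≤ f k := (show f i ∈ Set.Iic (f k) from iy ▸ subset_idl' _ hne)
      have := WW_le hω (Set.Iic_subset_Iic.2 this)
      change pp ω _ ≤ pp ω _ at this
      rw [hi.1, hk.1] at this
      exact absurd this plt.not_ge
    have e : φ (Pi.single i x + Pi.single k y) = φ (Pi.single i x) + φ (Pi.single k y) := map_add _ _ _
    have t1 : φ (Pi.single i x + Pi.single k y) (f i) ≠ 0 := by
      rw [e, Pi.add_apply, s2, add_zero]; exact hi.2 x hx
    have t2 : φ (Pi.single i x + Pi.single k y) (f k) ≠ 0 := by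
      rw [e, Pi.add_apply, s1, zero_add]; exact hk.2 y hy
    have w : idl (hsupp (φ (Pi.single i x + Pi.single k y))) = Set.Iic (f i) := by
      apply idl_eq hω t1
      rw [hφ, hi.1]
      apply WW_le hω
      rintro a ⟨b, hb, hab⟩
      by_cases hbi : b = i
      · subst hbi; exact hab
      · by_cases hbk : b = k
        · subst hbk; exact hab.trans hki
        · exfalso; apply hb
          simp [hbi, hbk]
    exact hn (show f k ∈ Set.Iic (f i) from w ▸ subset_idl' _ t2)
  · apply hh
    rw [hier_len hh hω (FF_pp hf k), hier_len hh hω (FF_pp hf i)]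
    exact len_lt hlt

theorem FF_omega (hassum : (∀ i : Ω, ∃ x : H i, x ≠ 0) ∨ Hierarchical Ω)
    {ω : Ω → ℝ} (hω : ∀ i, 0 < ω i) {φ : (∀ i, H i) ≃ₗ[S] (∀ i, H i)}
    {f : Ω ≃o Ω} (hf : FF ω φ f) (i : Ω) : ω i = ω (f i) := by
  have hp := FF_pp hf i
  rw [pp_eq, pp_eq] at hp
  rcases hassum with hK | hh
  · induction i using WellFoundedLT.induction with
    | _ i ih =>
      have : WW ω (Set.Iio (f i)) = WW ω (Set.Iio i) := by
        rw [← OrderIso.image_Iio]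
        unfold WW
        rw [finsum_mem_image f.injective.injOn]
        apply finsum_mem_congr rfl
        intro k hk
        refine (ih k hk ?_).symm
        have hp := FF_pp hf k
        rwa [pp_eq, pp_eq] at hp
      linarith
  · have : Set.Iio (f i) = Set.Iio i := by
      ext k
      rw [Set.mem_Iio, Set.mem_Iio, hier_lt hh, hier_lt hh, hier_len hh hω (FF_pp hf i)]
    rw [this] at hp
    linarith

theorem FF_iso {ω : Ω → ℝ} (hω : ∀ i, 0 < ω i) {φ : (∀ i, H i) ≃ₗ[S] (∀ i, H i)}
    (hφ : GLw S H ω φ) {i j : Ω} (h : RR ω φ i j) (h' : RR ω φ.symm j i) :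
    Nonempty (H i ≃ₗ[S] H j) := by
  classical
  refine ⟨LinearEquiv.ofLinear
    ((LinearMap.proj j) ∘ₗ φ.toLinearMap ∘ₗ (LinearMap.single S H i))
    ((LinearMap.proj i) ∘ₗ φ.symm.toLinearMap ∘ₗ (LinearMap.single S H j)) ?_ ?_⟩
  · ext y
    exact RR_back hω (GLw_symm hφ) h' y
  · ext x
    exact RR_back hω hφ h x

theorem FF_sub {ω : Ω → ℝ} (hω : ∀ i, 0 < ω i) {φ : (∀ i, H i) ≃ₗ[S] (∀ i, H i)}
    (hφ : GLw S H ω φ) {f : Ω ≃o Ω} (hf : FF ω φ f) (α : ∀ i, H i) :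
    idl (hsupp (φ α)) ⊆ f '' idl (hsupp α) := by
  classical
  rintro a ⟨b, hb, hab⟩
  obtain ⟨i, hi, hib⟩ := exists_single φ α hb
  have h := RR_idl hω hφ (hf.2 i ⟨_, hi⟩).2 hi
  have hbi : b ≤ f i := (show b ∈ Set.Iic (f i) from h ▸ subset_idl' _ hib)
  exact ⟨f.symm a, ⟨i, hi, by rw [OrderIso.symm_apply_le]; exact hab.trans hbi⟩, by simp⟩

theorem lam_unique {φ : (∀ i, H i) → (∀ i, H i)} {f g : Ω ≃o Ω}
    (hf : ∀ i ∉ Kset H, f i = i) (hg : ∀ i ∉ Kset H, g i = i)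
    (hf' : ∀ α, idl (hsupp (φ α)) = f '' idl (hsupp α))
    (hg' : ∀ α, idl (hsupp (φ α)) = g '' idl (hsupp α)) : f = g := by
  classical
  ext i
  by_cases hi : i ∈ Kset H
  · obtain ⟨x, hx⟩ := hi
    have := (hf' (Pi.single i x)).symm.trans (hg' (Pi.single i x))
    rw [idl_single hx, OrderIso.image_Iic, OrderIso.image_Iic] at this
    exact Set.Iic_injective this
  · rw [hf i hi, hg i hi]

theorem part1 (hassum : (∀ i : Ω, ∃ x : H i, x ≠ 0) ∨ Hierarchical Ω)
    {ω : Ω → ℝ} (hω : ∀ i, 0 < ω i) {φ : (∀ i, H i) ≃ₗ[S] (∀ i, H i)}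
    (hφ : GLw S H ω φ) : ∃ lam : Ω ≃o Ω, Qpred S H ω lam ∧
      ∀ α : ∀ i, H i, idl (hsupp (φ α)) = lam '' idl (hsupp α) := by
  classical
  obtain ⟨f, hf⟩ := exists_FF hω hφ
  obtain ⟨g, hg⟩ := exists_FF hω (GLw_symm hφ)
  have hgf := FF_inv hω hφ hf hg
  have hfg := FF_inv hω (GLw_symm hφ) hg hf
  have mf := FF_mono hassum hω hφ hf
  have mg := FF_mono hassum hω (GLw_symm hφ) hg
  let F : Ω ≃o Ω :=
    { toFun := f, invFun := g, left_inv := hgf, right_inv := hfg,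
      map_rel_iff' := by
        intro a b
        refine ⟨fun h => ?_, fun h => mf h⟩
        have := mg h
        simpa [hgf] using this }
  have hF : FF ω φ F := hf
  have hG : FF ω φ.symm F.symm := hg
  refine ⟨F, ⟨hF.1, fun i => ⟨FF_omega hassum hω hF i, ?_⟩⟩, fun α => ?_⟩
  · by_cases hi : i ∈ Kset H
    · have h1 := hF.2 i hi
      have h2 := (hG.2 _ h1.1).2
      rw [OrderIso.symm_apply_apply] at h2
      exact FF_iso hω hφ h1.2 h2
    · rw [hF.1 i hi]; exact ⟨LinearEquiv.refl _ _⟩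
  · refine Set.Subset.antisymm (FF_sub hω hφ hF α) ?_
    have := FF_sub hω (GLw_symm hφ) hG (φ α)
    rw [LinearEquiv.symm_apply_apply] at this
    rintro _ ⟨a, ha, rfl⟩
    obtain ⟨b, hb, rfl⟩ := this ha
    simpa using hb

theorem part2 {ω : Ω → ℝ} {ψ : (∀ i, H i) ≃ₗ[S] (∀ i, H i)} {μ : Ω ≃o Ω} (hμ : Qpred S H ω μ)
    (h : ∀ α : ∀ i, H i, idl (hsupp (ψ α)) = μ '' idl (hsupp α)) : GLw S H ω ψ := by
  intro α
  unfold wtw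
  rw [h, finsum_mem_image μ.injective.injOn]
  exact finsum_mem_congr rfl fun k _ => ((hμ.2 k).1).symm

theorem part3 {ω : Ω → ℝ} {μ : Ω ≃o Ω} (hμ : Qpred S H ω μ) :
    ∃ ψ : (∀ i, H i) ≃ₗ[S] (∀ i, H i),
      ∀ α : ∀ i, H i, idl (hsupp (ψ α)) = μ '' idl (hsupp α) := by
  have e := fun i => Classical.choice (hμ.2 i).2
  let E : (∀ i, H (μ i)) ≃ₗ[S] (∀ i, H i) := LinearEquiv.piCongrLeft S H μ.toEquiv
  refine ⟨(LinearEquiv.piCongrRight e).trans E, fun α => ?_⟩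
  have key : ∀ i, ((LinearEquiv.piCongrRight e).trans E) α (μ i) = e i (α i) := by
    intro i
    exact Equiv.piCongrLeft_apply_apply H μ.toEquiv _ i
  generalize ((LinearEquiv.piCongrRight e).trans E) α = β at key
  have hk : ∀ i, β (μ i) ≠ 0 ↔ α i ≠ 0 := by
    intro i; rw [key]; simp
  ext a
  constructor
  · rintro ⟨b, hb, hab⟩
    refine ⟨μ.symm a, ⟨μ.symm b, ?_, by simpa using hab⟩, by simp⟩
    apply (hk _).1
    rw [OrderIso.apply_symm_apply]; exact hb
  · rintro ⟨c, ⟨b, hb, hcb⟩, rfl⟩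
    exact ⟨μ b, (hk b).2 hb, by simpa using hcb⟩

end helpers

theorem stmt4 {Ω : Type*} [Fintype Ω] [Nonempty Ω] [PartialOrder Ω]
    {S : Type*} [Ring S] {H : Ω → Type*} [∀ i, AddCommGroup (H i)] [∀ i, Module S (H i)]
    (hassum : (∀ i : Ω, ∃ x : H i, x ≠ 0) ∨ Hierarchical Ω)
    (ω : Ω → ℝ) (hω : ∀ i : Ω, 0 < ω i) :
    -- (i)
    (∀ φ : (∀ i, H i) ≃ₗ[S] (∀ i, H i), GLw S H ω φ →
      ∃ lam : Ω ≃o Ω,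
        ((∀ i ∉ Kset H, lam i = i) ∧
          ∀ α : ∀ i, H i, idl (hsupp (φ α)) = lam '' idl (hsupp α)) ∧
        Qpred S H ω lam ∧
        ∀ lam' : Ω ≃o Ω,
          ((∀ i ∉ Kset H, lam' i = i) ∧
            ∀ α : ∀ i, H i, idl (hsupp (φ α)) = lam' '' idl (hsupp α)) → lam' = lam) ∧
    -- (ii)
    (∀ ψ : (∀ i, H i) ≃ₗ[S] (∀ i, H i),
      (∃ μ : Ω ≃o Ω, Qpred S H ω μ ∧
        ∀ α : ∀ i, H i, idl (hsupp (ψ α)) = μ '' idl (hsupp α)) → GLw S H ω ψ) ∧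
    -- (iii)
    (∃ ζ : {φ : (∀ i, H i) ≃ₗ[S] (∀ i, H i) // GLw S H ω φ} → {μ : Ω ≃o Ω // Qpred S H ω μ},
      (∀ φ, ∀ α : ∀ i, H i, idl (hsupp (φ.1 α)) = (ζ φ).1 '' idl (hsupp α)) ∧
      (∀ ζ' : {φ : (∀ i, H i) ≃ₗ[S] (∀ i, H i) // GLw S H ω φ} →
          {μ : Ω ≃o Ω // Qpred S H ω μ},
        (∀ φ, ∀ α : ∀ i, H i, idl (hsupp (φ.1 α)) = (ζ' φ).1 '' idl (hsupp α)) → ζ' = ζ) ∧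
      (∀ φ ψ χ : {φ : (∀ i, H i) ≃ₗ[S] (∀ i, H i) // GLw S H ω φ},
        (∀ α : ∀ i, H i, χ.1 α = φ.1 (ψ.1 α)) →
          ∀ i : Ω, (ζ χ).1 i = (ζ φ).1 ((ζ ψ).1 i)) ∧
      (∀ μ : {μ : Ω ≃o Ω // Qpred S H ω μ},
        ∃ φ : {φ : (∀ i, H i) ≃ₗ[S] (∀ i, H i) // GLw S H ω φ}, ζ φ = μ) ∧
      (∀ φ : {φ : (∀ i, H i) ≃ₗ[S] (∀ i, H i) // GLw S H ω φ},
        (∀ i : Ω, (ζ φ).1 i = i) ↔ GLPsupp S H φ.1)) := by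
  have p1 := fun (φ : (∀ i, H i) ≃ₗ[S] (∀ i, H i)) (hφ : GLw S H ω φ) => part1 hassum hω hφ
  refine ⟨?_, ?_, ?_⟩
  · intro φ hφ
    obtain ⟨lam, hQ, hl⟩ := p1 φ hφ
    exact ⟨lam, ⟨hQ.1, hl⟩, hQ, fun lam' h' => lam_unique (φ := φ) h'.1 hQ.1 h'.2 hl⟩
  · rintro ψ ⟨μ, hμ, h⟩
    exact part2 hμ h
  · choose z hz hz' using p1
    refine ⟨fun φ => ⟨z φ.1 φ.2, hz φ.1 φ.2⟩, fun φ => hz' φ.1 φ.2, ?_, ?_, ?_, ?_⟩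
    · intro ζ' h
      funext φ
      apply Subtype.ext
      exact lam_unique (φ := φ.1) (ζ' φ).2.1 (hz φ.1 φ.2).1 (h φ) (hz' φ.1 φ.2)
    · intro φ ψ χ h i
      have : z χ.1 χ.2 = (z ψ.1 ψ.2).trans (z φ.1 φ.2) := by
        refine lam_unique (φ := χ.1) (hz _ _).1 ?_ (hz' _ _) ?_
        · intro i hi
          rw [OrderIso.trans_apply, (hz ψ.1 ψ.2).1 i hi, (hz φ.1 φ.2).1 i hi]
        · intro α
          rw [h, hz' φ.1 φ.2, hz' ψ.1 ψ.2, Set.image_image]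
          rfl
      change z χ.1 χ.2 i = _
      rw [this]; rfl
    · intro μ
      obtain ⟨ψ, hψ⟩ := part3 μ.2
      refine ⟨⟨ψ, part2 μ.2 hψ⟩, Subtype.ext ?_⟩
      exact lam_unique (φ := ψ) (hz _ _).1 μ.2.1 (hz' _ _) hψ
    · intro φ
      constructor
      · intro h α
        rw [hz' φ.1 φ.2]
        have : (z φ.1 φ.2 : Ω → Ω) = id := funext h
        rw [this, Set.image_id]
      · intro h i
        have : z φ.1 φ.2 = OrderIso.refl Ω := by
          refine lam_unique (φ := φ.1) (hz _ _).1 (fun _ _ => rfl) (hz' _ _) ?_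
          intro α
          rw [h α]; simp
        change z φ.1 φ.2 i = i
        rw [this]; rfl
end

section
/- Assume that P is hierarchical, H satisfies Condition (A), and (H, P) satisfies Condition (B). Then for every r ∈ [1, m], every linear code C ⊆ δ(⋃_{j=1}^{r} W_j), and every S-linear map f : C → H preserving P-support, there exists φ ∈ GL_P(H) such that φ restricted to C equals f and φ(α) = α for all α ∈ δ(⋃_{j=r+1}^{m} W_j). In particular, H satisfies the MacWilliams extension property for P-support. -/
noncomputable def maxChainCard (Ω : Type*) [PartialOrder Ω] : ℕ :=
  sSup {n : ℕ | ∃ c : Finset Ω, IsChain (· ≤ ·) (c : Set Ω) ∧ c.card = n}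

def Wset {Ω : Type*} [PartialOrder Ω] (r : ℕ) : Set Ω := {u | lenP u = r}

def CondA (S : Type*) [Ring S] {Ω : Type*} (H : Ω → Type*)
    [∀ i, AddCommGroup (H i)] [∀ i, Module S (H i)] : Prop :=
  ∀ i : Ω, ∀ B : Submodule S (H i), ∀ h : B →ₗ[S] H i, Function.Injective h →
    ∃ τ : H i ≃ₗ[S] H i, ∀ b : B, τ b = h b

def CondB (S : Type*) [Ring S] {Ω : Type*} [PartialOrder Ω] (H : Ω → Type*)
    [∀ i, AddCommGroup (H i)] [∀ i, Module S (H i)] : Prop :=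
  ∀ k l : Ω, k ≤ l → k ≠ l →
    ∀ A : Submodule S (H l), ∀ f : A →ₗ[S] H k, ∃ g : H l →ₗ[S] H k, ∀ a : A, g a = f a

def MEPsupp (S : Type*) [Ring S] {Ω : Type*} [PartialOrder Ω] (H : Ω → Type*)
    [∀ i, AddCommGroup (H i)] [∀ i, Module S (H i)] : Prop :=
  ∀ C : Submodule S (∀ i, H i), ∀ f : C →ₗ[S] (∀ i, H i),
    (∀ x : C, idl (hsupp (f x)) = idl (hsupp (x : ∀ i, H i))) →
    ∃ φ : (∀ i, H i) ≃ₗ[S] (∀ i, H i),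
      (∀ α : ∀ i, H i, idl (hsupp (φ α)) = idl (hsupp α)) ∧ ∀ x : C, φ (x : ∀ i, H i) = f x


theorem aux_bdd {Ω : Type*} [Fintype Ω] (p : Finset Ω → Prop) :
    BddAbove {n : ℕ | ∃ c : Finset Ω, p c ∧ c.card = n} :=
  ⟨Fintype.card Ω, by rintro n ⟨c, _, rfl⟩; exact Finset.card_le_univ c⟩

theorem aux_bdd2 {Ω : Type*} [Fintype Ω] [PartialOrder Ω] (y : Ω) :
    BddAbove {n : ℕ | ∃ c : Finset Ω, IsChain (· ≤ ·) (c : Set Ω) ∧ y ∈ c ∧ (∀ x ∈ c, x ≤ y) ∧ c.card = n} :=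
  ⟨Fintype.card Ω, by rintro n ⟨c, _, _, _, rfl⟩; exact Finset.card_le_univ c⟩

theorem aux_ne {Ω : Type*} [PartialOrder Ω] (y : Ω) :
    1 ∈ {n : ℕ | ∃ c : Finset Ω, IsChain (· ≤ ·) (c : Set Ω) ∧ y ∈ c ∧ (∀ x ∈ c, x ≤ y) ∧ c.card = n} :=
  ⟨{y}, by simp, by simp, by simp, by simp⟩

theorem lenP_pos {Ω : Type*} [Fintype Ω] [PartialOrder Ω] (y : Ω) : 1 ≤ lenP y :=
  le_csSup (aux_bdd2 y) (aux_ne y)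

theorem lenP_spec {Ω : Type*} [Fintype Ω] [PartialOrder Ω] (y : Ω) :
    ∃ c : Finset Ω, IsChain (· ≤ ·) (c : Set Ω) ∧ y ∈ c ∧ (∀ x ∈ c, x ≤ y) ∧ c.card = lenP y :=
  Nat.sSup_mem ⟨1, aux_ne y⟩ (aux_bdd2 y)

theorem lenP_le {Ω : Type*} [Fintype Ω] [PartialOrder Ω] (y : Ω) :
    lenP y ≤ maxChainCard Ω := by
  obtain ⟨c, hc, _, _, h⟩ := lenP_spec y
  exact le_csSup (aux_bdd _) ⟨c, hc, h⟩

theorem lenP_lt {Ω : Type*} [Fintype Ω] [PartialOrder Ω] {x y : Ω} (hxy : x < y) :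
    lenP x < lenP y := by
  classical
  obtain ⟨c, hc, hx, hle, h⟩ := lenP_spec x
  have hy : y ∉ c := fun hy => absurd (hle y hy) (not_le_of_gt hxy)
  refine Nat.lt_of_succ_le (le_csSup (aux_bdd2 y) ⟨insert y c, ?_, by simp, ?_, ?_⟩)
  · rw [Finset.coe_insert]
    exact hc.insert (fun b hb _ => Or.inr ((hle b hb).trans hxy.le))
  · intro z hz
    rcases Finset.mem_insert.1 hz with rfl | hz
    · exact le_rfl
    · exact (hle z hz).trans hxy.le
  · rw [Finset.card_insert_of_notMem hy, h]

theorem aux_factor {S A N M : Type*} [Ring S] [AddCommGroup A] [AddCommGroup N] [AddCommGroup M]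
    [Module S A] [Module S N] [Module S M] (p : A →ₗ[S] N) (q : A →ₗ[S] M)
    (h : ∀ a, p a = 0 → q a = 0) :
    ∃ g : LinearMap.range p →ₗ[S] M, ∀ a, g ⟨p a, a, rfl⟩ = q a := by
  refine ⟨((LinearMap.ker p).liftQ q (fun a ha => h a ha)) ∘ₗ
    p.quotKerEquivRange.symm.toLinearMap, fun a => ?_⟩
  have : p.quotKerEquivRange.symm ⟨p a, a, rfl⟩ = (LinearMap.ker p).mkQ a := by
    rw [LinearEquiv.symm_apply_eq]; rfl
  rw [LinearMap.comp_apply, LinearEquiv.coe_coe, this]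
  exact Submodule.liftQ_apply _ _ _

theorem aux_prod {Ω S M : Type*} [Ring S] [AddCommGroup M] [Module S M] {H : Ω → Type*}
    [∀ i, AddCommGroup (H i)] [∀ i, Module S (H i)] (C : Submodule S (∀ i, H i)) (T : Finset Ω)
    (hT : ∀ l ∈ T, ∀ A : Submodule S (H l), ∀ f : A →ₗ[S] M, ∃ g : H l →ₗ[S] M, ∀ a : A, g a = f a) :
    ∀ q : C →ₗ[S] M, (∀ x : C, (∀ l ∈ T, x.1 l = 0) → q x = 0) →
      ∃ g : ∀ l, H l →ₗ[S] M, ∀ x : C, ∑ l ∈ T, g l (x.1 l) = q x := by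
  classical
  induction T using Finset.induction_on with
  | empty => intro q hq; exact ⟨fun _ => 0, fun x => by simp [hq x]⟩
  | insert l T hl ih =>
    intro q hq
    let D : Submodule S C :=
      { carrier := {x | ∀ l ∈ T, x.1 l = 0}
        add_mem' := by intro a b ha hb l hl; simp [ha l hl, hb l hl]
        zero_mem' := by intro l hl; rfl
        smul_mem' := by intro c a ha l hl; simp [ha l hl] }
    let p : C →ₗ[S] H l := LinearMap.proj l ∘ₗ C.subtype
    obtain ⟨g0, hg0⟩ := aux_factor (A := D) (p ∘ₗ D.subtype) (q ∘ₗ D.subtype) (by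
      intro a ha
      refine hq _ (fun l' hl' => ?_)
      rcases Finset.mem_insert.1 hl' with rfl | h
      · exact ha
      · exact a.2 l' h)
    obtain ⟨g1, hg1⟩ := hT l (by simp) _ g0
    obtain ⟨g, hg⟩ := ih (fun l' h => hT l' (by simp [h])) (q - g1 ∘ₗ p) (by
      intro x hx
      have h1 := hg0 ⟨x, hx⟩
      rw [← hg1] at h1
      have h2 : g1 (x.1 l) = q x := h1
      simp [p, h2])
    refine ⟨Function.update g l g1, fun x => ?_⟩
    rw [Finset.sum_insert hl, Function.update_self, Finset.sum_congr rfl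
      (g := fun l' => g l' (x.1 l'))]
    · rw [hg]; simp [p]
    · intro l' hl'
      rw [Function.update_of_ne]
      rintro rfl; exact hl hl'

theorem aux_idl {Ω : Type*} [Fintype Ω] [PartialOrder Ω] {H : Ω → Type*}
    [∀ i, AddCommGroup (H i)] {x y : ∀ i, H i} (h : idl (hsupp y) = idl (hsupp x)) {t : ℕ}
    (hx : ∀ i, t < lenP i → x i = 0) (i : Ω) (hi : t ≤ lenP i) (hxi : x i = 0) : y i = 0 := by
  by_contra hy
  have : i ∈ idl (hsupp x) := h ▸ ⟨i, hy, le_rfl⟩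
  obtain ⟨b, hb, hib⟩ := this
  rcases hib.eq_or_lt with rfl | hlt
  · exact hb hxi
  · exact hb (hx b (lt_of_le_of_lt hi (lenP_lt hlt)))

theorem aux_main {Ω : Type*} [Fintype Ω] [PartialOrder Ω]
    {S : Type*} [Ring S] {H : Ω → Type*} [∀ i, AddCommGroup (H i)] [∀ i, Module S (H i)]
    (hhier : Hierarchical Ω) (hA : CondA S H) (hB : CondB S H) (r : ℕ)
    (C : Submodule S (∀ i, H i)) (hC : ∀ x ∈ C, ∀ i, r < lenP i → x i = 0)
    (f : C →ₗ[S] (∀ i, H i))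
    (hf : ∀ x : C, idl (hsupp (f x)) = idl (hsupp (x : ∀ i, H i))) (T : Ω → Finset Ω)
    (hT : ∀ k l, l ∈ T k ↔ lenP k < lenP l ∧ lenP l ≤ r) (k : Ω) :
    ∃ (τ : H k ≃ₗ[S] H k) (g : ∀ l, H l →ₗ[S] H k),
      (∀ x : C, τ (x.1 k) + ∑ l ∈ T k, g l (x.1 l) = f x k) ∧
      (r < lenP k → ∀ a, τ a = a) := by
  by_cases hk : r < lenP k
  · have hTk : T k = ∅ := by
      ext l; rw [hT]; simp; omega
    refine ⟨LinearEquiv.refl S _, fun _ => 0, fun x => ?_, fun _ _ => rfl⟩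
    have h0 := hC x x.2 k hk
    have h1 := aux_idl (hf x) (hC x x.2) k hk.le h0
    simp [h0, h1]
  · let D : Submodule S C :=
      { carrier := {x | ∀ l, lenP k < lenP l → x.1 l = 0}
        add_mem' := by intro a b ha hb l hl; simp [ha l hl, hb l hl]
        zero_mem' := by intro l hl; rfl
        smul_mem' := by intro c a ha l hl; simp [ha l hl] }
    let p : C →ₗ[S] H k := LinearMap.proj k ∘ₗ C.subtype
    let q : C →ₗ[S] H k := LinearMap.proj k ∘ₗ f
    obtain ⟨g0, hg0⟩ := aux_factor (A := D) (p ∘ₗ D.subtype) (q ∘ₗ D.subtype) (by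
      intro a ha
      exact aux_idl (hf a.1) a.2 k le_rfl ha)
    obtain ⟨τ, hτ⟩ := hA k _ g0 (by
      rw [injective_iff_map_eq_zero]
      rintro ⟨_, a, rfl⟩ h
      rw [hg0] at h
      refine Subtype.ext ?_
      have h' : f a.1 k = 0 := h
      refine aux_idl (hf a.1).symm (t := lenP k) (fun i hi => ?_) k le_rfl h'
      exact aux_idl (hf a.1) a.2 i hi.le (a.2 i hi))
    obtain ⟨g, hg⟩ := aux_prod C (T k) (fun l hl => hB k l (hhier _ _ ((hT k l).1 hl).1)
      (by rintro rfl; exact lt_irrefl _ ((hT k k).1 hl).1)) (q - τ.toLinearMap ∘ₗ p) (by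
      intro x hx
      have hxD : x ∈ D := by
        intro l hl
        by_cases h : lenP l ≤ r
        · exact hx l ((hT k l).2 ⟨hl, h⟩)
        · exact hC x x.2 l (not_le.1 h)
      have h1 := hg0 ⟨x, hxD⟩
      rw [← hτ] at h1
      have h2 : τ (x.1 k) = f x k := h1
      simp [p, q, h2])
    refine ⟨τ, g, fun x => ?_, fun h => absurd h hk⟩
    rw [hg]; simp [p, q]

theorem aux_part1 {Ω : Type*} [Fintype Ω] [PartialOrder Ω]
    {S : Type*} [Ring S] {H : Ω → Type*} [∀ i, AddCommGroup (H i)] [∀ i, Module S (H i)]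
    (hhier : Hierarchical Ω) (hA : CondA S H) (hB : CondB S H) (r : ℕ)
    (C : Submodule S (∀ i, H i)) (hC : ∀ x ∈ C, ∀ i, r < lenP i → x i = 0)
    (f : C →ₗ[S] (∀ i, H i))
    (hf : ∀ x : C, idl (hsupp (f x)) = idl (hsupp (x : ∀ i, H i))) :
    ∃ φ : (∀ i, H i) ≃ₗ[S] (∀ i, H i),
      (∀ α : ∀ i, H i, idl (hsupp (φ α)) = idl (hsupp α)) ∧
      (∀ x : C, φ (x : ∀ i, H i) = f x) ∧
      (∀ α : ∀ i, H i, (∀ i, lenP i ≤ r → α i = 0) → φ α = α) := by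
  classical
  let T : Ω → Finset Ω := fun k => Finset.univ.filter fun l => lenP k < lenP l ∧ lenP l ≤ r
  have hT : ∀ k l, l ∈ T k ↔ lenP k < lenP l ∧ lenP l ≤ r := by intro k l; simp [T]
  choose τ g hg hτ using aux_main hhier hA hB r C hC f hf T hT
  let φ : (∀ i, H i) →ₗ[S] (∀ i, H i) := LinearMap.pi fun k =>
    (τ k).toLinearMap ∘ₗ LinearMap.proj k + ∑ l ∈ T k, g k l ∘ₗ LinearMap.proj l
  have hφ : ∀ α k, φ α k = τ k (α k) + ∑ l ∈ T k, g k l (α l) := by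
    intro α k; simp [φ]
  have htop : ∀ α k, (∀ l, lenP k < lenP l → α l = 0) → φ α k = τ k (α k) := by
    intro α k h
    rw [hφ, Finset.sum_eq_zero, add_zero]
    intro l hl
    rw [h l ((hT k l).1 hl).1, map_zero]
  have hsup : ∀ α, idl (hsupp (φ α)) = idl (hsupp α) := by
    intro α
    ext a
    constructor
    · rintro ⟨k, hk, hak⟩
      by_cases h0 : α k = 0
      · have : ∃ l, lenP k < lenP l ∧ α l ≠ 0 := by
          by_contra! hcon
          exact hk (by rw [htop α k hcon, h0, map_zero])
        obtain ⟨l, hl, hl0⟩ := this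
        exact ⟨l, hl0, hak.trans (hhier _ _ hl)⟩
      · exact ⟨k, h0, hak⟩
    · rintro ⟨k, hk, hak⟩
      have hk0 : α k ≠ 0 := hk
      obtain ⟨l, hl, hmax⟩ := Finset.exists_max_image
        (Finset.univ.filter fun l => α l ≠ 0) lenP ⟨k, by simp [hk0]⟩
      have hl0 : α l ≠ 0 := by simpa using hl
      have hmax' : ∀ j, lenP l < lenP j → α j = 0 := by
        intro j hj
        by_contra h
        exact absurd (hmax j (by simp [h])) (not_le.2 hj)
      have hkl := hmax k (by simp [hk0])
      rcases hkl.eq_or_lt with h | h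
      · refine ⟨k, ?_, hak⟩
        change φ α k ≠ 0
        rw [htop α k (by rw [h]; exact hmax')]
        simpa using hk0
      · refine ⟨l, ?_, hak.trans (hhier _ _ h)⟩
        change φ α l ≠ 0
        rw [htop α l hmax']
        simpa using hl0
  have hinj : Function.Injective φ := by
    rw [injective_iff_map_eq_zero]
    intro α h
    ext k
    by_contra hk
    have : k ∈ idl (hsupp (φ α)) := by rw [hsup]; exact ⟨k, hk, le_rfl⟩
    obtain ⟨b, hb, _⟩ := this
    exact hb (by rw [h]; rfl)
  have hsurj' : ∀ n, ∀ y : ∀ i, H i, (∀ i, n < lenP i → y i = 0) → ∃ x, φ x = y := by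
    intro n
    induction n with
    | zero =>
      intro y hy
      exact ⟨0, by rw [map_zero]; ext i; exact (hy i (lenP_pos i)).symm⟩
    | succ n ih =>
      intro y hy
      let x : ∀ i, H i := fun i => (τ i).symm (y i)
      obtain ⟨z, hz⟩ := ih (y - φ x) (by
        intro i hi
        rw [Pi.sub_apply, htop x i]
        · simp [x]
        · intro l hl
          simp only [x]
          rw [hy l (by omega), map_zero])
      exact ⟨z + x, by rw [map_add, hz]; simp⟩
  have hsurj : Function.Surjective φ := fun y =>
    hsurj' (maxChainCard Ω) y (fun i hi => absurd hi (not_lt.2 (lenP_le i)))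
  refine ⟨LinearEquiv.ofBijective φ ⟨hinj, hsurj⟩, hsup, fun x => ?_, fun α hα => ?_⟩
  · ext k
    change φ x.1 k = _
    rw [hφ, hg]
  · ext k
    change φ α k = _
    rw [hφ, Finset.sum_eq_zero, add_zero]
    · by_cases h : r < lenP k
      · exact hτ k h _
      · rw [hα k (not_lt.1 h), map_zero]
    · intro l hl
      rw [hα l ((hT k l).1 hl).2, map_zero]

theorem stmt6 {Ω : Type*} [Fintype Ω] [Nonempty Ω] [PartialOrder Ω]
    {S : Type*} [Ring S] {H : Ω → Type*} [∀ i, AddCommGroup (H i)] [∀ i, Module S (H i)]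
    (hhier : Hierarchical Ω) (hA : CondA S H) (hB : CondB S H) :
    (∀ r ∈ Finset.Icc 1 (maxChainCard Ω),
      ∀ C : Submodule S (∀ i, H i),
        (∀ x ∈ C, hsupp x ⊆ ⋃ j ∈ Finset.Icc 1 r, Wset (Ω := Ω) j) →
        ∀ f : C →ₗ[S] (∀ i, H i),
          (∀ x : C, idl (hsupp (f x)) = idl (hsupp (x : ∀ i, H i))) →
          ∃ φ : (∀ i, H i) ≃ₗ[S] (∀ i, H i),
            (∀ α : ∀ i, H i, idl (hsupp (φ α)) = idl (hsupp α)) ∧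
            (∀ x : C, φ (x : ∀ i, H i) = f x) ∧
            (∀ α : ∀ i, H i,
              hsupp α ⊆ ⋃ j ∈ Finset.Icc (r + 1) (maxChainCard Ω), Wset (Ω := Ω) j →
                φ α = α)) ∧
    MEPsupp S H := by
  constructor
  · intro r _ C hC f hf
    obtain ⟨φ, h1, h2, h3⟩ := aux_part1 hhier hA hB r C (by
      intro x hx i hi
      by_contra h
      have := hC x hx (show i ∈ hsupp x from h)
      simp [Wset] at this
      omega) f hf
    refine ⟨φ, h1, h2, fun α hα => h3 α fun i hi => ?_⟩
    by_contra h
    have := hα (show i ∈ hsupp α from h)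
    simp [Wset] at this
    omega
  · intro C f hf
    obtain ⟨φ, h1, h2, _⟩ := aux_part1 hhier hA hB (maxChainCard Ω) C
      (fun x _ i hi => absurd hi (not_lt.2 (lenP_le i))) f hf
    exact ⟨φ, h1, h2⟩
end
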